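/- Let L, N be a lightlike frame along the unit-speed spacelike curve γ̂ with first components L₀ and N₀ of L and N nonzero at 0, and set h̃_L(u) = ⟨γ̂(u) − γ̂(0), L(0)/L₀(0)⟩ and h̃_N(u) = ⟨γ̂(u) − γ̂(0), N(0)/N₀(0)⟩. Then for every integer k ≥ 2: h̃_L(0) = h̃_L′(0) = ⋯ = h̃_L^{(k)}(0) = 0 if and only if α_L(0) = α_L′(0) = ⋯ = α_L^{(k−2)}(0) = 0; and h̃_N(0) = ⋯ = h̃_N^{(k)}(0) = 0 if and only if α_N(0) = ⋯ = α_N^{(k−2)}(0) = 0. -/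

import Mathlib

open scoped Topology

noncomputable section

/-- Points/vectors of Lorentz–Minkowski 3-space `ℝ³₁`. -/
abbrev R3 : Type := Fin 3 → ℝ

/-- The Lorentz–Minkowski scalar product `⟨x,y⟩ = -x₀y₀ + x₁y₁ + x₂y₂`. -/
def mink (x y : R3) : ℝ := -(x 0 * y 0) + x 1 * y 1 + x 2 * y 2

/-- `(L, N)` is a lightlike frame along the unit-speed spacelike curve `γ` on `I`:
`γ, L, N` are smooth on `I`, `⟨e,e⟩ = 1` (with `e = γ'`), `⟨e,L⟩ = ⟨e,N⟩ = 0`,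
`⟨L,L⟩ = ⟨N,N⟩ = 0` and `⟨L,N⟩ = 1` on `I`. -/
structure LightlikeFrame (I : Set ℝ) (γ L N : ℝ → R3) : Prop where
  smooth_gamma : ContDiffOn ℝ (⊤ : ℕ∞) γ I
  smooth_L : ContDiffOn ℝ (⊤ : ℕ∞) L I
  smooth_N : ContDiffOn ℝ (⊤ : ℕ∞) N I
  unit_speed : ∀ u ∈ I, mink (deriv γ u) (deriv γ u) = 1
  eL : ∀ u ∈ I, mink (deriv γ u) (L u) = 0
  eN : ∀ u ∈ I, mink (deriv γ u) (N u) = 0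
  LL : ∀ u ∈ I, mink (L u) (L u) = 0
  NN : ∀ u ∈ I, mink (N u) (N u) = 0
  LN : ∀ u ∈ I, mink (L u) (N u) = 1

/-- `α_L = ⟨γ'', L⟩`. -/
def alphaL (γ L : ℝ → R3) (u : ℝ) : ℝ := mink (deriv (deriv γ) u) (L u)

/-- `α_N = ⟨γ'', N⟩`. -/
def alphaN (γ N : ℝ → R3) (u : ℝ) : ℝ := mink (deriv (deriv γ) u) (N u)

/-- `α_G = ⟨L, N'⟩`. -/
def alphaG (L N : ℝ → R3) (u : ℝ) : ℝ := mink (L u) (deriv N u)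

/-- `σ_L = α_L' + α_L α_G`. -/
def sigmaL (γ L N : ℝ → R3) (u : ℝ) : ℝ :=
  deriv (alphaL γ L) u + alphaL γ L u * alphaG L N u

/-- `σ_N = α_N' - α_N α_G`. -/
def sigmaN (γ L N : ℝ → R3) (u : ℝ) : ℝ :=
  deriv (alphaN γ N) u - alphaN γ N u * alphaG L N u

theorem ContDiffAt.eventually_differentiableAt {f : ℝ → ℝ} (hf : ContDiffAt ℝ (⊤ : ℕ∞) f 0) :
    ∀ᶠ u in 𝓝 0, DifferentiableAt ℝ f u := by
  have h1 : ContDiffAt ℝ 1 f 0 := hf.of_le (by exact_mod_cast le_top)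
  filter_upwards [h1.eventually (by simp)] with u hu
  exact hu.differentiableAt (by simp)

theorem ContDiffAt.deriv_of_smooth {E : Type*} [NormedAddCommGroup E] [NormedSpace ℝ E]
    {f : ℝ → E} {x : ℝ}
    (hf : ContDiffAt ℝ (⊤ : ℕ∞) f x) : ContDiffAt ℝ (⊤ : ℕ∞) (deriv f) x :=
  hf.derivWithin (by simp)

/-- All derivatives of `f` of order less than `n` vanish at `0`. -/
def VanishesToOrder (n : ℕ) (f : ℝ → ℝ) : Prop := ∀ l < n, deriv^[l] f 0 = 0

namespace VanishesToOrder

theorem succ_iff {n : ℕ} {f : ℝ → ℝ} :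
    VanishesToOrder (n + 1) f ↔ f 0 = 0 ∧ VanishesToOrder n (deriv f) := by
  refine ⟨fun h => ⟨h 0 n.succ_pos, fun l hl => h (l + 1) (by omega)⟩, ?_⟩
  rintro ⟨h0, h⟩ (_ | l) hl
  · exact h0
  · exact h l (by omega)

theorem mono {m n : ℕ} {f : ℝ → ℝ} (h : VanishesToOrder n f) (hmn : m ≤ n) :
    VanishesToOrder m f := fun l hl => h l (hl.trans_le hmn)

theorem congr {n : ℕ} {f g : ℝ → ℝ} (h : VanishesToOrder n f) (hfg : f =ᶠ[𝓝 0] g) :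
    VanishesToOrder n g := by
  induction n generalizing f g with
  | zero => exact fun l hl => absurd hl l.not_lt_zero
  | succ n ih =>
    rw [succ_iff] at h ⊢
    exact ⟨hfg.eq_of_nhds ▸ h.1, ih h.2 hfg.deriv⟩

theorem add {n : ℕ} {f g : ℝ → ℝ} (hf : ContDiffAt ℝ (⊤ : ℕ∞) f 0)
    (hg : ContDiffAt ℝ (⊤ : ℕ∞) g 0) (h : VanishesToOrder n f) (h' : VanishesToOrder n g) :
    VanishesToOrder n (fun u => f u + g u) := by
  induction n generalizing f g with
  | zero => exact fun l hl => absurd hl l.not_lt_zero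
  | succ n ih =>
    rw [succ_iff] at h h' ⊢
    refine ⟨by simp [h.1, h'.1],
      (ih (ContDiffAt.deriv_of_smooth hf) (ContDiffAt.deriv_of_smooth hg) h.2 h'.2).congr ?_⟩
    filter_upwards [hf.eventually_differentiableAt, hg.eventually_differentiableAt] with u hu hu'
    exact (hu.hasDerivAt.add hu'.hasDerivAt).deriv.symm

theorem mul_left {n : ℕ} {f g : ℝ → ℝ} (hf : ContDiffAt ℝ (⊤ : ℕ∞) f 0)
    (hg : ContDiffAt ℝ (⊤ : ℕ∞) g 0) (h : VanishesToOrder n g) :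
    VanishesToOrder n (fun u => f u * g u) := by
  induction n generalizing f g with
  | zero => exact fun l hl => absurd hl l.not_lt_zero
  | succ n ih =>
    have hn : VanishesToOrder n g := h.mono n.le_succ
    rw [succ_iff] at h ⊢
    have hf' := ContDiffAt.deriv_of_smooth hf
    have hg' := ContDiffAt.deriv_of_smooth hg
    refine ⟨by simp [h.1],
      (add (hf'.mul hg) (hf.mul hg') (ih hf' hg hn) (ih hf hg' h.2)).congr ?_⟩
    filter_upwards [hf.eventually_differentiableAt, hg.eventually_differentiableAt] with u hu hu'
    exact (hu.hasDerivAt.mul hu'.hasDerivAt).deriv.symm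

/-- In a linear system `A' = B α + C p`, `C' = -A α + C q` with `A` and `C` vanishing at `0` and
`B` not, the order of vanishing of `A` exceeds that of `α` by one. -/
theorem succ_iff_of_linear_system {A B C α p q : ℝ → ℝ}
    (sA : ContDiffAt ℝ (⊤ : ℕ∞) A 0) (sB : ContDiffAt ℝ (⊤ : ℕ∞) B 0)
    (sC : ContDiffAt ℝ (⊤ : ℕ∞) C 0) (sα : ContDiffAt ℝ (⊤ : ℕ∞) α 0)
    (sp : ContDiffAt ℝ (⊤ : ℕ∞) p 0) (sq : ContDiffAt ℝ (⊤ : ℕ∞) q 0)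
    (hA : ∀ᶠ u in 𝓝 0, deriv A u = B u * α u + C u * p u)
    (hC : ∀ᶠ u in 𝓝 0, deriv C u = -A u * α u + C u * q u)
    (A0 : A 0 = 0) (B0 : B 0 ≠ 0) (C0 : C 0 = 0) (m : ℕ) :
    VanishesToOrder (m + 1) A ↔ VanishesToOrder m α := by
  have C_of_α (m : ℕ) (h : VanishesToOrder m α) : VanishesToOrder (m + 1) C := by
    induction m with
    | zero => exact succ_iff.2 ⟨C0, fun l hl => absurd hl l.not_lt_zero⟩
    | succ m ih =>
      refine succ_iff.2 ⟨C0, (add (sA.neg.mul sα) (sq.mul sC) (mul_left sA.neg sα h)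
        (mul_left sq sC (ih (h.mono m.le_succ)))).congr ?_⟩
      filter_upwards [hC] with u hu
      rw [hu, mul_comm (C u)]
  constructor
  · intro h
    induction m with
    | zero => exact fun l hl => absurd hl l.not_lt_zero
    | succ m ih =>
      have hCm := C_of_α m (ih (h.mono (m + 1).le_succ))
      have sA' := ContDiffAt.deriv_of_smooth sA
      refine (mul_left (sB.inv B0) (sA'.add (sp.neg.mul sC))
        (add sA' (sp.neg.mul sC) (succ_iff.1 h).2 (mul_left sp.neg sC hCm))).congr ?_
      filter_upwards [hA, sB.continuousAt.eventually_ne B0] with u hu hBu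
      simp only [Pi.inv_apply]
      rw [hu]
      field_simp
      ring
  · intro h
    refine succ_iff.2 ⟨A0, (add (sB.mul sα) (sp.mul sC) (mul_left sB sα h)
      (mul_left sp sC ((C_of_α m h).mono m.le_succ))).congr ?_⟩
    filter_upwards [hA] with u hu
    rw [hu, mul_comm (C u)]

end VanishesToOrder

theorem mink_comm (x y : R3) : mink x y = mink y x := by
  simp only [mink]; ring

theorem mink_expand {e l n : R3} (hee : mink e e = 1) (hel : mink e l = 0) (hen : mink e n = 0)
    (hll : mink l l = 0) (hnn : mink n n = 0) (hln : mink l n = 1) (x y : R3) :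
    mink x y = mink x e * mink e y + mink x l * mink n y + mink x n * mink l y := by
  simp only [mink] at *
  have h : (!![e 0, e 1, e 2; l 0, l 1, l 2; n 0, n 1, n 2] : Matrix (Fin 3) (Fin 3) ℝ) *
      !![-e 0, -n 0, -l 0; e 1, n 1, l 1; e 2, n 2, l 2] = 1 := by
    ext i j
    fin_cases i <;> fin_cases j <;> simp [Matrix.mul_apply, Fin.sum_univ_three] <;> linarith
  rw [mul_eq_one_comm] at h
  have key (i j : Fin 3) := congrFun (congrFun h i) j
  have h00 := key 0 0
  have h01 := key 0 1
  have h02 := key 0 2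
  have h10 := key 1 0
  have h11 := key 1 1
  have h12 := key 1 2
  have h20 := key 2 0
  have h21 := key 2 1
  have h22 := key 2 2
  simp [Matrix.mul_apply, Fin.sum_univ_three] at h00 h01 h02 h10 h11 h12 h20 h21 h22
  linear_combination x 0 * y 0 * h00 - x 0 * y 1 * h01 - x 0 * y 2 * h02
    + x 1 * y 0 * h10 - x 1 * y 1 * h11 - x 1 * y 2 * h12
    + x 2 * y 0 * h20 - x 2 * y 1 * h21 - x 2 * y 2 * h22

theorem HasDerivAt.mink {f g : ℝ → R3} {f' g' : R3} {u : ℝ} (hf : HasDerivAt f f' u)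
    (hg : HasDerivAt g g' u) :
    HasDerivAt (fun t => _root_.mink (f t) (g t))
      (_root_.mink f' (g u) + _root_.mink (f u) g') u := by
  rw [hasDerivAt_pi] at hf hg
  refine ((((hf 0).mul (hg 0)).neg.add ((hf 1).mul (hg 1))).add
    ((hf 2).mul (hg 2))).congr_deriv ?_
  simp only [_root_.mink]
  ring

theorem ContDiffAt.mink {f g : ℝ → R3} {u : ℝ} (hf : ContDiffAt ℝ (⊤ : ℕ∞) f u)
    (hg : ContDiffAt ℝ (⊤ : ℕ∞) g u) :
    ContDiffAt ℝ (⊤ : ℕ∞) (fun t => _root_.mink (f t) (g t)) u := by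
  rw [contDiffAt_pi] at hf hg
  exact (((hf 0).mul (hg 0)).neg.add ((hf 1).mul (hg 1))).add ((hf 2).mul (hg 2))

namespace LightlikeFrame

theorem symm {I : Set ℝ} {γ L N : ℝ → R3} (h : LightlikeFrame I γ L N) :
    LightlikeFrame I γ N L where
  smooth_gamma := h.smooth_gamma
  smooth_L := h.smooth_N
  smooth_N := h.smooth_L
  unit_speed := h.unit_speed
  eL := h.eN
  eN := h.eL
  LL := h.NN
  NN := h.LL
  LN u hu := by rw [mink_comm, h.LN u hu]

theorem height_vanishes_iff {I : Set ℝ} {γ L N : ℝ → R3} (h : LightlikeFrame I γ L N)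
    (hI : IsOpen I) (h0 : (0 : ℝ) ∈ I) {c : ℝ} (hc : c ≠ 0) (m : ℕ) :
    VanishesToOrder (m + 2) (fun u => mink (γ u - γ 0) (c • L 0)) ↔
      VanishesToOrder m (alphaL γ L) := by
  have hmem : ∀ᶠ u in 𝓝 (0 : ℝ), u ∈ I := hI.mem_nhds h0
  have sγ {u : ℝ} (hu : u ∈ I) := h.smooth_gamma.contDiffAt (hI.mem_nhds hu)
  have sL {u : ℝ} (hu : u ∈ I) := h.smooth_L.contDiffAt (hI.mem_nhds hu)
  have sN {u : ℝ} (hu : u ∈ I) := h.smooth_N.contDiffAt (hI.mem_nhds hu)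
  have se {u : ℝ} (hu : u ∈ I) := ContDiffAt.deriv_of_smooth (sγ hu)
  have dγ {u : ℝ} (hu : u ∈ I) := ((sγ hu).differentiableAt (by simp)).hasDerivAt
  have dL {u : ℝ} (hu : u ∈ I) := ((sL hu).differentiableAt (by simp)).hasDerivAt
  have de {u : ℝ} (hu : u ∈ I) := ((se hu).differentiableAt (by simp)).hasDerivAt
  have deriv_of_const {f : ℝ → ℝ} {c d u : ℝ} (hu : u ∈ I) (hf : ∀ t ∈ I, f t = c)
      (hd : HasDerivAt f d u) : d = 0 :=
    hd.unique ((hasDerivAt_const u c).congr_of_eventuallyEq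
      (Filter.eventually_of_mem (hI.mem_nhds hu) hf))
  set v : R3 := c • L 0 with hv
  have mink_v (x : R3) : mink x v = c * mink x (L 0) := by
    simp only [mink, hv, Pi.smul_apply, smul_eq_mul]; ring
  have zero_right (x : R3) : mink x 0 = 0 := by simp [mink]
  have dconst (u : ℝ) := hasDerivAt_const u v
  have sv : ContDiffAt ℝ (⊤ : ℕ∞) (fun _ : ℝ => v) 0 := contDiffAt_const
  have hh : ∀ᶠ u in 𝓝 0,
      deriv (fun u => mink (γ u - γ 0) v) u = mink (deriv γ u) v := by
    filter_upwards [hmem] with u hu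
    rw [(((dγ hu).sub_const (γ 0)).mink (dconst u)).deriv, zero_right, add_zero]
  have expand {u : ℝ} (hu : u ∈ I) (x : R3) := mink_expand (h.unit_speed u hu) (h.eL u hu)
    (h.eN u hu) (h.LL u hu) (h.NN u hu) (h.LN u hu) x v
  have main := VanishesToOrder.succ_iff_of_linear_system
    (A := fun u => mink (deriv γ u) v) (B := fun u => mink (N u) v)
    (C := fun u => mink (L u) v) (α := alphaL γ L)
    (p := fun u => mink (deriv (deriv γ) u) (N u)) (q := fun u => mink (deriv L u) (N u))
    ((se h0).mink sv) ((sN h0).mink sv) ((sL h0).mink sv)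
    ((ContDiffAt.deriv_of_smooth (se h0)).mink (sL h0))
    ((ContDiffAt.deriv_of_smooth (se h0)).mink (sN h0))
    ((ContDiffAt.deriv_of_smooth (sL h0)).mink (sN h0))
    (by
      filter_upwards [hmem] with u hu
      have hee := deriv_of_const hu h.unit_speed ((de hu).mink (de hu))
      rw [mink_comm (deriv γ u)] at hee
      rw [((de hu).mink (dconst u)).deriv, zero_right, add_zero, expand hu, alphaL]
      linear_combination mink (deriv γ u) v / 2 * hee)
    (by
      filter_upwards [hmem] with u hu
      have hLL := deriv_of_const hu h.LL ((dL hu).mink (dL hu))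
      have heL := deriv_of_const hu h.eL ((de hu).mink (dL hu))
      rw [mink_comm (L u)] at hLL
      rw [mink_comm (deriv γ u)] at heL
      rw [((dL hu).mink (dconst u)).deriv, zero_right, add_zero, expand hu, alphaL]
      linear_combination mink (N u) v / 2 * hLL + mink (deriv γ u) v * heL)
    (by simp only [mink_v, h.eL 0 h0, mul_zero])
    (by simpa only [mink_v, mink_comm (N 0), h.LN 0 h0, mul_one] using hc)
    (by simp only [mink_v, h.LL 0 h0, mul_zero]) m
  rw [← main, VanishesToOrder.succ_iff]
  refine ⟨fun H => H.2.congr hh, fun H => ⟨by simp [mink], H.congr ?_⟩⟩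
  filter_upwards [hh] with u hu using hu.symm

theorem contact_iff {I : Set ℝ} {γ L N : ℝ → R3} (h : LightlikeFrame I γ L N)
    (hI : IsOpen I) (h0 : (0 : ℝ) ∈ I) (hL0 : L 0 0 ≠ 0) (k : ℕ) (hk : 2 ≤ k) :
    (∀ l ≤ k, deriv^[l] (fun u => mink (γ u - γ 0) ((L 0 0)⁻¹ • L 0)) 0 = 0) ↔
      (∀ l ≤ k - 2, deriv^[l] (alphaL γ L) 0 = 0) := by
  obtain ⟨m, rfl⟩ := Nat.exists_eq_add_of_le' hk
  simpa only [VanishesToOrder, Nat.lt_succ_iff, Nat.add_sub_cancel] using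
    h.height_vanishes_iff hI h0 (inv_ne_zero hL0) (m + 1)

end LightlikeFrame

/-- With `h̃_L(u) = ⟨γ̂(u) - γ̂(0), L(0)/L₀(0)⟩`, for every `k ≥ 2`:
`h̃_L(0) = ⋯ = h̃_L⁽ᵏ⁾(0) = 0` iff `α_L(0) = ⋯ = α_L⁽ᵏ⁻²⁾(0) = 0`;
similarly for `h̃_N` and `α_N`. -/
theorem contact_with_lightlike_plane (a b : ℝ) (γ L N : ℝ → R3)
    (hframe : LightlikeFrame (Set.Ioo a b) γ L N)
    (h0 : (0 : ℝ) ∈ Set.Ioo a b)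
    (hL0 : L 0 0 ≠ 0) (hN0 : N 0 0 ≠ 0) :
    (∀ k : ℕ, 2 ≤ k →
      ((∀ l ≤ k, deriv^[l] (fun u => mink (γ u - γ 0) ((L 0 0)⁻¹ • L 0)) 0 = 0) ↔
       (∀ l ≤ k - 2, deriv^[l] (alphaL γ L) 0 = 0))) ∧
    (∀ k : ℕ, 2 ≤ k →
      ((∀ l ≤ k, deriv^[l] (fun u => mink (γ u - γ 0) ((N 0 0)⁻¹ • N 0)) 0 = 0) ↔
       (∀ l ≤ k - 2, deriv^[l] (alphaN γ N) 0 = 0))) := by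
  exact ⟨hframe.contact_iff isOpen_Ioo h0 hL0, hframe.symm.contact_iff isOpen_Ioo h0 hN0⟩
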